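/- Let α ≥ 1 and let d be the Carnot–Carathéodory distance on ℝ³ induced by X₁ and X₂. There exist constants c, C > 0 depending only on α such that for all (x,y), (x′,y′) ∈ ℝ² one has c ( |x − x′| + |y − y′| + |x|^{1/2} |y′ − y|^{1/2} ) ≤ d( (x,y,0), (x′,y′,0) ) ≤ C ( |x − x′| + |y − y′| + |x|^{1/2} |y′ − y|^{1/2} ). -/

import Mathlib

open MeasureTheory

/-- The minimum appearing in the quasi-distance `δ`, with the conventions of the paper:
it equals `|ζ| ^ (1/(α+1))` when `x = 0` (and it is `0` when `ζ = 0`). -/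
noncomputable def ccMin (α x ζ : ℝ) : ℝ :=
  if x = 0 then |ζ| ^ (1 / (α + 1))
  else min (|ζ| ^ (1 / (α + 1))) (|ζ| ^ ((1 : ℝ) / 2) / |x| ^ ((α - 1) / 2))

/-- A horizontal curve on `[0,T]` for the vector fields `X₁ = ∂ₓ`, `X₂ = ∂_y + |x|^α ∂_z`:
a Lipschitz curve whose components have a.e. derivatives `(h₁, h₂, |x|^α h₂)` with
`h₁² + h₂² ≤ 1`. -/
def IsHorizontal (α T : ℝ) (γ : ℝ → ℝ × ℝ × ℝ) : Prop :=
  (∃ K, LipschitzOnWith K γ (Set.Icc 0 T)) ∧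
  ∃ h₁ h₂ : ℝ → ℝ, Measurable h₁ ∧ Measurable h₂ ∧
    (∀ t, (h₁ t) ^ 2 + (h₂ t) ^ 2 ≤ 1) ∧
    ∀ᵐ t ∂(volume.restrict (Set.Ioo 0 T)),
      HasDerivAt (fun s => (γ s).1) (h₁ t) t ∧
      HasDerivAt (fun s => (γ s).2.1) (h₂ t) t ∧
      HasDerivAt (fun s => (γ s).2.2) (|(γ t).1| ^ α * h₂ t) t

/-- The Carnot–Carathéodory distance associated with `X₁, X₂`. -/
noncomputable def ccDist (α : ℝ) (p q : ℝ × ℝ × ℝ) : ℝ :=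
  sInf {T : ℝ | 0 < T ∧ ∃ γ : ℝ → ℝ × ℝ × ℝ, IsHorizontal α T γ ∧ γ 0 = p ∧ γ T = q}

/-- The Carnot–Carathéodory ball. -/
def ccBall (α : ℝ) (p : ℝ × ℝ × ℝ) (r : ℝ) : Set (ℝ × ℝ × ℝ) :=
  {q | ccDist α p q < r}

/-- The algebraic quasi-distance `δ`. -/
noncomputable def deltaDist (α : ℝ) (p q : ℝ × ℝ × ℝ) : ℝ :=
  |q.1 - p.1| + |q.2.1 - p.2.1| +
    ccMin α p.1 (p.2.2 - q.2.2 + |p.1| ^ α * (q.2.1 - p.2.1))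

/-- The perimeter measure `μ = |x|^α ℒ²` on the plane `z = 0`, identified with `ℝ²`. -/
noncomputable def planeMeasure (α : ℝ) : Measure (ℝ × ℝ) :=
  volume.withDensity (fun u => ENNReal.ofReal (|u.1| ^ α))

open Set

/-!
A horizontal curve of duration `T` starting at abscissa `x` changes the first two coordinates by at
most `T`. Along it the function `|x|^α y - z` has velocity `(|x|^α - |ξ|^α) h₂`, where `ξ` is the
current abscissa. If `2T < |x|`, then `ξ` stays comparable to `x` and this velocity is
`O(|x|^(α-1) T)`; a curve that returns to its initial height therefore satisfies
`|x|^α |Δy| = O(|x|^(α-1) T²)`, that is `|x| |Δy| = O(T²)`. If `|x| ≤ 2T`, this bound is immediate.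

Conversely, let `R² = |x| |Δy|`. If `R < |x|`, rescaling `x` to the abscissa `u` with
`|u|^α = (1 + R / |x|) |x|^α` costs time `O(R)`, and two strokes parallel to the `y`-axis, of signed
length `v` at abscissa `x` and `w` at abscissa `u`, with `v + w = Δy` and `|w| = R`, bring the
height back. If `|x| ≤ R`, one can afford to travel to `x = 0`, where moving along `y` leaves the
height unchanged.
-/

theorem abs_sub_le_of_ae_abs_deriv_le {f : ℝ → ℝ} {a b B : ℝ}
    (hf : AbsolutelyContinuousOnInterval f a b) (hB : ∀ᵐ t, t ∈ uIoc a b → |deriv f t| ≤ B) :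
    |f b - f a| ≤ B * |b - a| := by
  rw [← hf.integral_deriv_eq_sub, ← Real.norm_eq_abs]
  exact intervalIntegral.norm_integral_le_of_norm_le_const_ae hB

theorem abs_coe_sign_le_one {R : Type*} [Ring R] [LinearOrder R] [IsStrictOrderedRing R] (x : R) :
    |(SignType.sign x : R)| ≤ 1 := by
  cases SignType.sign x <;> simp

theorem lipschitzOnWith_Icc_trans {β : Type*} [PseudoMetricSpace β] {K : NNReal} {f : ℝ → β}
    {a b c : ℝ} (hab : LipschitzOnWith K f (Icc a b)) (hbc : LipschitzOnWith K f (Icc b c)) :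
    LipschitzOnWith K f (Icc a c) := by
  have ordered : ∀ s ∈ Icc a c, ∀ t ∈ Icc a c, s ≤ t → dist (f s) (f t) ≤ K * dist s t := by
    intro s hs t ht hst
    rcases le_total t b with htb | hbt
    · exact hab.dist_le_mul s ⟨hs.1, hst.trans htb⟩ t ⟨ht.1, htb⟩
    rcases le_total b s with hbs | hsb
    · exact hbc.dist_le_mul s ⟨hbs, hs.2⟩ t ⟨hbt, ht.2⟩
    calc dist (f s) (f t) ≤ dist (f s) (f b) + dist (f b) (f t) := dist_triangle _ _ _
      _ ≤ K * dist s b + K * dist b t :=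
        add_le_add (hab.dist_le_mul s ⟨hs.1, hsb⟩ b ⟨hs.1.trans hsb, le_rfl⟩)
          (hbc.dist_le_mul b ⟨le_rfl, hbt.trans ht.2⟩ t ⟨hbt, ht.2⟩)
      _ = K * dist s t := by
        rw [← mul_add, dist_add_dist_of_mem_segment (segment_eq_Icc hst ▸ ⟨hsb, hbt⟩)]
  refine LipschitzOnWith.of_dist_le_mul fun s hs t ht => ?_
  rcases le_total s t with hst | hts
  · exact ordered s hs t ht hst
  · simpa only [dist_comm] using ordered t ht s hs hts

theorem exists_abs_rpow_sub_one_le (p : ℝ) :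
    ∃ L, 0 ≤ L ∧ ∀ t ∈ Icc (1 / 2 : ℝ) 2, |t ^ p - 1| ≤ L * |t - 1| := by
  have hsmooth : ContDiffOn ℝ 1 (fun t : ℝ => t ^ p) (Icc (1 / 2) 2) := fun t ht =>
    (Real.contDiffAt_rpow_const_of_ne (by linarith [ht.1])).contDiffWithinAt
  obtain ⟨K, hK⟩ := hsmooth.exists_lipschitzOnWith one_ne_zero (convex_Icc _ _) isCompact_Icc
  refine ⟨K, K.2, fun t ht => ?_⟩
  simpa [Real.dist_eq] using hK.dist_le_mul t ht 1 (by norm_num)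

theorem exists_mul_abs_rpow_sub_rpow_le (p : ℝ) :
    ∃ L, 0 ≤ L ∧ ∀ a b : ℝ, 2 * |b - a| ≤ a → a * |b ^ p - a ^ p| ≤ L * a ^ p * |b - a| := by
  obtain ⟨L, hL0, hL⟩ := exists_abs_rpow_sub_one_le p
  refine ⟨L, hL0, fun a b hab => ?_⟩
  rcases (show 0 ≤ a by linarith [abs_nonneg (b - a)]).eq_or_lt with rfl | ha
  · rw [zero_mul]
    positivity
  have hba : b / a ∈ Icc (1 / 2 : ℝ) 2 := by
    obtain ⟨h₁, h₂⟩ := abs_le.1 (show |b - a| ≤ a / 2 by linarith)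
    rw [mem_Icc, le_div_iff₀ ha, div_le_iff₀ ha]
    constructor <;> linarith
  have hb : b = a * (b / a) := by field_simp
  have hsub : b - a = a * (b / a - 1) := by rw [mul_sub_one, ← hb]
  have hpow : b ^ p - a ^ p = a ^ p * ((b / a) ^ p - 1) := by
    rw [mul_sub_one, ← Real.mul_rpow ha.le (by linarith [hba.1]), ← hb]
  rw [hsub, hpow, abs_mul, abs_mul, abs_of_pos ha, abs_of_pos (Real.rpow_pos_of_pos ha p)]
  calc a * (a ^ p * |(b / a) ^ p - 1|) = a ^ p * a * |(b / a) ^ p - 1| := by ring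
    _ ≤ a ^ p * a * (L * |b / a - 1|) := by gcongr; exact hL _ hba
    _ = L * a ^ p * (a * |b / a - 1|) := by ring

theorem exists_abs_rpow_eq_one_add_mul {p : ℝ} (hp : p ≠ 0) :
    ∃ L, 0 ≤ L ∧ ∀ x : ℝ, ∀ s ∈ Icc (-1 / 2 : ℝ) 1,
      ∃ u, |u| ^ p = (1 + s) * |x| ^ p ∧ |u - x| ≤ L * (|s| * |x|) := by
  obtain ⟨L, hL0, hL⟩ := exists_abs_rpow_sub_one_le p⁻¹
  refine ⟨L, hL0, fun x s hs => ?_⟩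
  have hs' : 1 + s ∈ Icc (1 / 2 : ℝ) 2 := ⟨by linarith [hs.1], by linarith [hs.2]⟩
  have hs0 : 0 ≤ 1 + s := by linarith [hs'.1]
  refine ⟨(1 + s) ^ p⁻¹ * x, ?_, ?_⟩
  · have hroot : 0 ≤ (1 + s) ^ p⁻¹ := by positivity
    rw [abs_mul, abs_of_nonneg hroot, Real.mul_rpow hroot (abs_nonneg x),
      Real.rpow_inv_rpow hs0 hp]
  · calc |(1 + s) ^ p⁻¹ * x - x| = |(1 + s) ^ p⁻¹ - 1| * |x| := by rw [← abs_mul, sub_one_mul]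
      _ ≤ L * |1 + s - 1| * |x| := by gcongr; exact hL _ hs'
      _ = L * (|s| * |x|) := by rw [add_sub_cancel_left, mul_assoc]

/-- The horizontal vector `h₁ X₁ + h₂ X₂` at the point `p`. -/
noncomputable def horizontalVector (α : ℝ) (p : ℝ × ℝ × ℝ) (h₁ h₂ : ℝ) : ℝ × ℝ × ℝ :=
  (h₁, h₂, |p.1| ^ α * h₂)

theorem hasDerivAt_horizontalVector_iff {α h₁ h₂ t : ℝ} {p : ℝ × ℝ × ℝ} {γ : ℝ → ℝ × ℝ × ℝ} :
    HasDerivAt γ (horizontalVector α p h₁ h₂) t ↔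
      HasDerivAt (fun s => (γ s).1) h₁ t ∧ HasDerivAt (fun s => (γ s).2.1) h₂ t ∧
        HasDerivAt (fun s => (γ s).2.2) (|p.1| ^ α * h₂) t := by
  refine ⟨fun h => ?_, fun ⟨hx, hy, hz⟩ => hx.prodMk (hy.prodMk hz)⟩
  have hyz : HasDerivAt (fun s => (γ s).2) (h₂, |p.1| ^ α * h₂) t :=
    (ContinuousLinearMap.snd ℝ ℝ (ℝ × ℝ)).hasFDerivAt.comp_hasDerivAt t h
  exact ⟨(ContinuousLinearMap.fst ℝ ℝ (ℝ × ℝ)).hasFDerivAt.comp_hasDerivAt t h,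
    (ContinuousLinearMap.fst ℝ ℝ ℝ).hasFDerivAt.comp_hasDerivAt t hyz,
    (ContinuousLinearMap.snd ℝ ℝ ℝ).hasFDerivAt.comp_hasDerivAt t hyz⟩

theorem abs_le_one_of_sq_add_sq_le_one {a b : ℝ} (h : a ^ 2 + b ^ 2 ≤ 1) : |a| ≤ 1 :=
  (sq_le_one_iff_abs_le_one a).1 (by linarith [sq_nonneg b])

theorem isHorizontal_iff_ae_hasDerivAt {α T : ℝ} {γ : ℝ → ℝ × ℝ × ℝ} :
    IsHorizontal α T γ ↔ (∃ K, LipschitzOnWith K γ (Icc 0 T)) ∧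
      ∃ h₁ h₂ : ℝ → ℝ, Measurable h₁ ∧ Measurable h₂ ∧ (∀ t, h₁ t ^ 2 + h₂ t ^ 2 ≤ 1) ∧
        ∀ᵐ t, t ∈ Ioo 0 T → HasDerivAt γ (horizontalVector α (γ t) (h₁ t) (h₂ t)) t := by
  simp only [IsHorizontal, hasDerivAt_horizontalVector_iff, ae_restrict_iff' measurableSet_Ioo]

theorem isHorizontal_add_smul {α T : ℝ} {p v : ℝ × ℝ × ℝ} (hv : v.1 ^ 2 + v.2.1 ^ 2 ≤ 1)
    (hvz : ∀ t, |p.1 + t * v.1| ^ α * v.2.1 = v.2.2) :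
    IsHorizontal α T fun t => p + t • v := by
  have hlip : LipschitzWith ‖ContinuousLinearMap.toSpanSingleton ℝ v‖₊ fun t : ℝ => t • v :=
    (ContinuousLinearMap.toSpanSingleton ℝ v).lipschitz
  refine isHorizontal_iff_ae_hasDerivAt.2 ⟨⟨_, ((LipschitzWith.const p).add hlip).lipschitzOnWith⟩,
    fun _ => v.1, fun _ => v.2.1, measurable_const, measurable_const, fun _ => hv,
    .of_forall fun t _ => ?_⟩
  have hvel : horizontalVector α (p + t • v) v.1 v.2.1 = v := by
    ext <;> simp [horizontalVector, hvz t]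
  rw [hvel]
  simpa using ((hasDerivAt_id t).smul_const v).const_add p

namespace IsHorizontal

variable {α T S : ℝ} {γ η : ℝ → ℝ × ℝ × ℝ}

theorem mono (hγ : IsHorizontal α T γ) (hST : S ≤ T) : IsHorizontal α S γ := by
  obtain ⟨⟨K, hK⟩, h₁, h₂, hm₁, hm₂, hh, hd⟩ := hγ
  exact ⟨⟨K, hK.mono (Icc_subset_Icc_right hST)⟩, h₁, h₂, hm₁, hm₂, hh,
    ae_restrict_of_ae_restrict_of_subset (Ioo_subset_Ioo_right hST) hd⟩

theorem concat (hγ : IsHorizontal α T γ) (hη : IsHorizontal α S η) (hjoin : γ T = η 0) :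
    IsHorizontal α (T + S) fun t => if t ≤ T then γ t else η (t - T) := by
  obtain ⟨⟨K, hK⟩, g₁, g₂, hg₁, hg₂, hg, hγ'⟩ := isHorizontal_iff_ae_hasDerivAt.1 hγ
  obtain ⟨⟨M, hM⟩, k₁, k₂, hk₁, hk₂, hk, hη'⟩ := isHorizontal_iff_ae_hasDerivAt.1 hη
  set ζ : ℝ → ℝ × ℝ × ℝ := fun t => if t ≤ T then γ t else η (t - T) with hζ
  have hleft : EqOn ζ γ (Iic T) := fun t ht => if_pos ht
  have hright : EqOn ζ (fun t => η (t - T)) (Ici T) := fun t ht => by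
    rcases eq_or_lt_of_le (mem_Ici.1 ht) with rfl | hlt
    · simp [hζ, hjoin]
    · exact if_neg hlt.not_ge
  have hlip : LipschitzOnWith (max K M) ζ (Icc 0 (T + S)) := by
    refine lipschitzOnWith_Icc_trans (b := T) (fun s hs t ht => ?_) fun s hs t ht => ?_
    · rw [hleft hs.2, hleft ht.2]
      exact hK.weaken (le_max_left K M) hs ht
    · rw [hright hs.1, hright ht.1]
      simpa using hM.weaken (le_max_right K M) (x := s - T) (y := t - T)
        ⟨by linarith [hs.1], by linarith [hs.2]⟩ ⟨by linarith [ht.1], by linarith [ht.2]⟩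
  refine isHorizontal_iff_ae_hasDerivAt.2 ⟨⟨_, hlip⟩, fun t => if t ≤ T then g₁ t else k₁ (t - T),
    fun t => if t ≤ T then g₂ t else k₂ (t - T),
    .ite measurableSet_Iic hg₁ (hk₁.comp (measurable_id.sub_const T)),
    .ite measurableSet_Iic hg₂ (hk₂.comp (measurable_id.sub_const T)), fun t => ?_, ?_⟩
  · dsimp only
    split_ifs
    exacts [hg t, hk (t - T)]
  · have hη'' := (measurePreserving_sub_right volume T).quasiMeasurePreserving.ae hη'
    filter_upwards [hγ', hη'', Measure.ae_ne volume T] with t htγ htη hne ht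
    rcases hne.lt_or_gt with hlt | hgt
    · simp only [if_pos hlt.le, hleft hlt.le]
      exact (htγ ⟨ht.1, hlt⟩).congr_of_eventuallyEq (hleft.eventuallyEq_of_mem (Iic_mem_nhds hlt))
    · simp only [if_neg hgt.not_ge, hright hgt.le]
      exact ((htη ⟨by linarith, by linarith [ht.2]⟩).comp_sub_const t T).congr_of_eventuallyEq
        (hright.eventuallyEq_of_mem (Ici_mem_nhds hgt))

theorem abs_map_sub_le (hT : 0 ≤ T) (hγ : IsHorizontal α T γ) (φ : ℝ × ℝ × ℝ →L[ℝ] ℝ) {B : ℝ}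
    (hB : ∀ t ∈ Ioo 0 T, ∀ h₁ h₂ : ℝ, h₁ ^ 2 + h₂ ^ 2 ≤ 1 →
      |φ (horizontalVector α (γ t) h₁ h₂)| ≤ B) :
    |φ (γ T) - φ (γ 0)| ≤ B * T := by
  obtain ⟨⟨K, hK⟩, h₁, h₂, -, -, hh, hγ'⟩ := isHorizontal_iff_ae_hasDerivAt.1 hγ
  have hac : AbsolutelyContinuousOnInterval (fun t => φ (γ t)) 0 T := by
    refine LipschitzOnWith.absolutelyContinuousOnInterval (K := ‖φ‖₊ * K) ?_
    rw [uIcc_of_le hT]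
    exact φ.lipschitz.comp_lipschitzOnWith hK
  have hderiv : ∀ᵐ t, t ∈ uIoc 0 T → |deriv (fun t => φ (γ t)) t| ≤ B := by
    filter_upwards [hγ', Measure.ae_ne volume T] with t ht hne htmem
    rw [uIoc_of_le hT] at htmem
    have htmem' : t ∈ Ioo 0 T := ⟨htmem.1, htmem.2.lt_of_ne hne⟩
    have hφγ : HasDerivAt (fun t => φ (γ t)) (φ (horizontalVector α (γ t) (h₁ t) (h₂ t))) t :=
      φ.hasFDerivAt.comp_hasDerivAt t (ht htmem')
    rw [hφγ.deriv]
    exact hB t htmem' _ _ (hh t)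
  simpa [abs_of_nonneg hT] using abs_sub_le_of_ae_abs_deriv_le hac hderiv

theorem abs_fst_sub_le (hT : 0 ≤ T) (hγ : IsHorizontal α T γ) : |(γ T).1 - (γ 0).1| ≤ T := by
  simpa [horizontalVector] using hγ.abs_map_sub_le hT (.fst ℝ ℝ (ℝ × ℝ)) (B := 1)
    fun _ _ _ _ h => abs_le_one_of_sq_add_sq_le_one h

theorem abs_snd_sub_le (hT : 0 ≤ T) (hγ : IsHorizontal α T γ) : |(γ T).2.1 - (γ 0).2.1| ≤ T := by
  simpa [horizontalVector] using hγ.abs_map_sub_le hT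
    ((ContinuousLinearMap.fst ℝ ℝ ℝ).comp (.snd ℝ ℝ (ℝ × ℝ))) (B := 1)
    fun _ _ _ _ h => abs_le_one_of_sq_add_sq_le_one ((add_comm _ _).trans_le h)

theorem abs_mul_snd_sub_sub_le (hT : 0 ≤ T) (hγ : IsHorizontal α T γ) {c B : ℝ}
    (hB : ∀ t ∈ Ioo 0 T, |c - |(γ t).1| ^ α| ≤ B) :
    |c * ((γ T).2.1 - (γ 0).2.1) - ((γ T).2.2 - (γ 0).2.2)| ≤ B * T := by
  let φ : ℝ × ℝ × ℝ →L[ℝ] ℝ :=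
    (c • ContinuousLinearMap.fst ℝ ℝ ℝ - .snd ℝ ℝ ℝ).comp (.snd ℝ ℝ (ℝ × ℝ))
  have hφ : |φ (γ T) - φ (γ 0)| ≤ B * T := by
    refine hγ.abs_map_sub_le hT φ fun t ht h₁ h₂ hh => ?_
    have hh₂ : |h₂| ≤ 1 := abs_le_one_of_sq_add_sq_le_one ((add_comm _ _).trans_le hh)
    calc |φ (horizontalVector α (γ t) h₁ h₂)| = |c - |(γ t).1| ^ α| * |h₂| := by
          simp [φ, horizontalVector, ← abs_mul, sub_mul]
      _ ≤ |c - |(γ t).1| ^ α| := mul_le_of_le_one_right (abs_nonneg _) hh₂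
      _ ≤ B := hB t ht
  rwa [mul_sub, sub_sub_sub_comm]

theorem exists_abs_mul_abs_sub_le_sq (α : ℝ) :
    ∃ L, 0 < L ∧ ∀ {T : ℝ} {γ : ℝ → ℝ × ℝ × ℝ}, 0 ≤ T → IsHorizontal α T γ →
      (γ T).2.2 = (γ 0).2.2 → |(γ 0).1| * |(γ T).2.1 - (γ 0).2.1| ≤ L * T ^ 2 := by
  obtain ⟨L, hL0, hL⟩ := exists_mul_abs_rpow_sub_rpow_le α
  refine ⟨L + 2, by linarith, fun {T γ} hT hγ hz => ?_⟩
  set r := |(γ 0).1|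
  set Δ := |(γ T).2.1 - (γ 0).2.1|
  rcases le_or_gt r (2 * T) with hnear | hfar
  · calc r * Δ ≤ 2 * T * T := by gcongr; exact hγ.abs_snd_sub_le hT
      _ ≤ (L + 2) * T ^ 2 := by nlinarith [mul_nonneg hL0 (sq_nonneg T)]
  have hr0 : 0 < r := by linarith
  have hrα : 0 < r ^ α := Real.rpow_pos_of_pos hr0 α
  have hvelocity : ∀ t ∈ Ioo 0 T, |r ^ α - |(γ t).1| ^ α| ≤ L * r ^ α * T / r := by
    intro t ht
    have hdist : |(|(γ t).1| - r)| ≤ T := (abs_abs_sub_abs_le_abs_sub _ _).trans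
      (((hγ.mono ht.2.le).abs_fst_sub_le ht.1.le).trans ht.2.le)
    rw [le_div_iff₀' hr0, abs_sub_comm]
    exact (hL r _ (by linarith)).trans (by gcongr)
  have hΔ : r ^ α * Δ ≤ L * r ^ α * T / r * T := by
    simpa [hz, abs_mul, abs_of_pos hrα] using hγ.abs_mul_snd_sub_sub_le hT hvelocity
  have hmain : r ^ α * (r * Δ) ≤ r ^ α * (L * T ^ 2) := by
    calc r ^ α * (r * Δ) = r * (r ^ α * Δ) := by ring
      _ ≤ r * (L * r ^ α * T / r * T) := by gcongr
      _ = r ^ α * (L * T ^ 2) := by field_simp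
  calc r * Δ ≤ L * T ^ 2 := le_of_mul_le_mul_left hmain hrα
    _ ≤ (L + 2) * T ^ 2 := by gcongr; linarith

end IsHorizontal

/-- `q` can be reached from `p` by a horizontal curve in time exactly `T`. Unlike in `ccDist`, the
time `0` is allowed, so that degenerate segments need no separate treatment. -/
def IsReachableIn (α T : ℝ) (p q : ℝ × ℝ × ℝ) : Prop :=
  0 ≤ T ∧ ∃ γ : ℝ → ℝ × ℝ × ℝ, IsHorizontal α T γ ∧ γ 0 = p ∧ γ T = q

theorem isReachableIn_along_x (α x x' y z : ℝ) : IsReachableIn α |x' - x| (x, y, z) (x', y, z) := by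
  refine ⟨abs_nonneg _, _, isHorizontal_add_smul (p := (x, y, z))
    (v := (SignType.sign (x' - x), 0, 0)) ?_ (by simp), by simp, by simp⟩
  simpa using abs_coe_sign_le_one (x' - x)

theorem isReachableIn_along_y (α x y z v : ℝ) :
    IsReachableIn α |v| (x, y, z) (x, y + v, z + |x| ^ α * v) := by
  refine ⟨abs_nonneg _, _, isHorizontal_add_smul (p := (x, y, z))
    (v := (0, SignType.sign v, |x| ^ α * SignType.sign v)) ?_ (by simp), by simp, ?_⟩
  · simpa using abs_coe_sign_le_one v
  · simp [mul_left_comm |v|]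

namespace IsReachableIn

variable {α T S : ℝ} {p q r : ℝ × ℝ × ℝ}

theorem trans (hpq : IsReachableIn α T p q) (hqr : IsReachableIn α S q r) :
    IsReachableIn α (T + S) p r := by
  obtain ⟨hT, γ, hγ, hγ0, hγT⟩ := hpq
  obtain ⟨hS, η, hη, hη0, hηS⟩ := hqr
  refine ⟨add_nonneg hT hS, _, hγ.concat hη (hγT.trans hη0.symm), by simp [hT, hγ0], ?_⟩
  rcases hS.eq_or_lt with rfl | hS
  · simp [hγT, ← hη0, hηS]
  · simp [hS.not_ge, hηS]

theorem mono (hpq : IsReachableIn α T p q) (hTS : T ≤ S) : IsReachableIn α S p q := by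
  have hrest : IsReachableIn α (S - T) q q :=
    ⟨sub_nonneg.2 hTS, _, isHorizontal_add_smul (p := q) (v := 0) (by simp) (by simp),
      by simp, by simp⟩
  simpa using hpq.trans hrest

theorem ccDist_le (hpq : IsReachableIn α T p q) : ccDist α p q ≤ T := by
  refine le_of_forall_gt_imp_ge_of_dense fun S hTS => ?_
  exact csInf_le ⟨0, fun _ h => h.1.le⟩ ⟨hpq.1.trans_lt hTS, (hpq.mono hTS.le).2⟩

theorem le_ccDist (hpq : IsReachableIn α T p q) {B : ℝ}
    (hB : ∀ S, IsReachableIn α S p q → B ≤ S) : B ≤ ccDist α p q :=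
  le_csInf ⟨T + 1, by linarith [hpq.1], (hpq.mono (by linarith)).2⟩ fun S hS =>
    hB S ⟨hS.1.le, hS.2⟩

end IsReachableIn

theorem isReachableIn_of_two_strokes {α x u v w : ℝ} (hvw : |x| ^ α * v + |u| ^ α * w = 0)
    (x' y z : ℝ) :
    IsReachableIn α (|v| + |u - x| + |w| + |x' - u|) (x, y, z) (x', y + (v + w), z) := by
  have hlast := isReachableIn_along_y α u (y + v) (z + |x| ^ α * v) w
  rw [add_assoc z, hvw, add_zero, add_assoc y] at hlast
  exact (((isReachableIn_along_y α x y z v).trans (isReachableIn_along_x α x u _ _)).trans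
    hlast).trans (isReachableIn_along_x α u x' _ _)

theorem exists_two_strokes {α : ℝ} (hα : 0 < α) :
    ∃ C, 0 < C ∧ ∀ x Δ : ℝ, ∃ u v w, |x| ^ α * v + |u| ^ α * w = 0 ∧ v + w = Δ ∧
      |u - x| ≤ C * √(|x| * |Δ|) ∧ |v| ≤ |Δ| + √(|x| * |Δ|) ∧ |w| ≤ |Δ| + √(|x| * |Δ|) := by
  obtain ⟨L, hL0, hL⟩ := exists_abs_rpow_eq_one_add_mul hα.ne'
  refine ⟨L + 1, by linarith, fun x Δ => ?_⟩
  set R := √(|x| * |Δ|)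
  have hR0 : 0 ≤ R := Real.sqrt_nonneg _
  have hRsq : R * R = |x| * |Δ| := Real.mul_self_sqrt (by positivity)
  rcases le_or_gt |x| R with hxR | hRx
  · refine ⟨0, 0, Δ, by simp [Real.zero_rpow hα.ne'], zero_add Δ, ?_, ?_, by linarith⟩
    · rw [zero_sub, abs_neg]
      nlinarith
    · rw [abs_zero]
      positivity
  have hx0 : 0 < |x| := hR0.trans_lt hRx
  set s := R / |x|
  have hs0 : 0 ≤ s := by positivity
  have hs1 : s ≤ 1 := (div_le_one hx0).2 hRx.le
  have hsx : |s| * |x| = R := by rw [abs_of_nonneg hs0, div_mul_cancel₀ R hx0.ne']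
  have hsR : s * R = |Δ| := by rw [div_mul_eq_mul_div, hRsq, mul_div_cancel_left₀ _ hx0.ne']
  obtain ⟨u, hu, hux⟩ := hL x s ⟨by linarith, hs1⟩
  set w := -(SignType.sign Δ * R)
  have hw : |w| ≤ R := by
    rw [abs_neg, abs_mul, abs_of_nonneg hR0]
    exact mul_le_of_le_one_left hR0 (abs_coe_sign_le_one Δ)
  have hsw : s * w = -Δ := by rw [mul_neg, mul_left_comm, hsR, sign_mul_abs]
  refine ⟨u, Δ - w, w, ?_, sub_add_cancel Δ w, ?_, ?_, ?_⟩
  · rw [hu]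
    linear_combination |x| ^ α * hsw
  · rw [hsx] at hux
    linarith
  · exact (abs_sub Δ w).trans (by gcongr)
  · linarith [abs_nonneg Δ]

theorem exists_isReachableIn_time_le {α : ℝ} (hα : 0 < α) :
    ∃ C, 0 < C ∧ ∀ x y x' y' z : ℝ,
      ∃ T ≤ C * (|x - x'| + |y - y'| + √(|x| * |y' - y|)),
        IsReachableIn α T (x, y, z) (x', y', z) := by
  obtain ⟨C, hC0, hC⟩ := exists_two_strokes hα
  refine ⟨2 * C + 2, by linarith, fun x y x' y' z => ?_⟩
  obtain ⟨u, v, w, hvw, hΔ, hu, hv, hw⟩ := hC x (y' - y)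
  have hreach := isReachableIn_of_two_strokes hvw x' y z
  rw [hΔ, add_sub_cancel] at hreach
  refine ⟨_, ?_, hreach⟩
  rw [abs_sub_comm y y']
  set R := √(|x| * |y' - y|)
  have hx' : |x' - u| ≤ |u - x| + |x - x'| := by
    simpa only [abs_sub_comm x' u] using abs_sub_le u x x'
  calc |v| + |u - x| + |w| + |x' - u|
    _ ≤ (|y' - y| + R) + C * R + (|y' - y| + R) + (C * R + |x - x'|) := by linarith
    _ = |x - x'| + 2 * |y' - y| + (2 * C + 2) * R := by ring
    _ ≤ (2 * C + 2) * |x - x'| + (2 * C + 2) * |y' - y| + (2 * C + 2) * R := by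
      nlinarith [abs_nonneg (x - x'), abs_nonneg (y' - y)]
    _ = (2 * C + 2) * (|x - x'| + |y' - y| + R) := by ring

theorem exists_mul_le_time_of_isReachableIn (α : ℝ) :
    ∃ c, 0 < c ∧ ∀ {T x y x' y' z : ℝ}, IsReachableIn α T (x, y, z) (x', y', z) →
      c * (|x - x'| + |y - y'| + √(|x| * |y' - y|)) ≤ T := by
  obtain ⟨L, hL0, hL⟩ := IsHorizontal.exists_abs_mul_abs_sub_le_sq α
  refine ⟨(2 + √L)⁻¹, by positivity, ?_⟩
  rintro T x y x' y' z ⟨hT, γ, hγ, hγ0, hγT⟩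
  have hx : |x - x'| ≤ T := by
    simpa [hγ0, hγT, abs_sub_comm] using hγ.abs_fst_sub_le hT
  have hy : |y - y'| ≤ T := by
    simpa [hγ0, hγT, abs_sub_comm] using hγ.abs_snd_sub_le hT
  have hR : √(|x| * |y' - y|) ≤ √L * T := by
    rw [← Real.sqrt_sq hT, ← Real.sqrt_mul hL0.le]
    exact Real.sqrt_le_sqrt (by simpa [hγ0, hγT] using hL hT hγ (by simp [hγ0, hγT]))
  rw [inv_mul_le_iff₀ (by positivity)]
  linarith

theorem ccDist_on_plane_general {α : ℝ} (hα : 0 < α) :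
    ∃ c C : ℝ, 0 < c ∧ 0 < C ∧ ∀ x y x' y' z : ℝ,
      c * (|x - x'| + |y - y'| + |x| ^ ((1 : ℝ) / 2) * |y' - y| ^ ((1 : ℝ) / 2)) ≤
          ccDist α (x, y, z) (x', y', z) ∧
        ccDist α (x, y, z) (x', y', z) ≤
          C * (|x - x'| + |y - y'| + |x| ^ ((1 : ℝ) / 2) * |y' - y| ^ ((1 : ℝ) / 2)) := by
  obtain ⟨c, hc0, hc⟩ := exists_mul_le_time_of_isReachableIn α
  obtain ⟨C, hC0, hC⟩ := exists_isReachableIn_time_le hα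
  refine ⟨c, C, hc0, hC0, fun x y x' y' z => ?_⟩
  obtain ⟨T, hT, hreach⟩ := hC x y x' y' z
  simp only [← Real.sqrt_eq_rpow, ← Real.sqrt_mul (abs_nonneg x)]
  exact ⟨hreach.le_ccDist fun S hS => hc hS, hreach.ccDist_le.trans hT⟩

/-- On the plane `z = 0` the CC distance is comparable with
`|x - x'| + |y - y'| + |x|^{1/2} |y' - y|^{1/2}`. -/
theorem ccDist_on_plane (α : ℝ) (hα : 1 ≤ α) :
    ∃ c C : ℝ, 0 < c ∧ 0 < C ∧ ∀ x y x' y' : ℝ,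
      c * (|x - x'| + |y - y'| + |x| ^ ((1 : ℝ) / 2) * |y' - y| ^ ((1 : ℝ) / 2)) ≤
          ccDist α (x, y, 0) (x', y', 0) ∧
        ccDist α (x, y, 0) (x', y', 0) ≤
          C * (|x - x'| + |y - y'| + |x| ^ ((1 : ℝ) / 2) * |y' - y| ^ ((1 : ℝ) / 2)) := by
  obtain ⟨c, C, hc, hC, h⟩ := ccDist_on_plane_general (zero_lt_one.trans_le hα)
  exact ⟨c, C, hc, hC, fun x y x' y' => h x y x' y' 0⟩
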